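/- Let 1 ≤ j ≤ N−2 and let m_j ≥ m_{j+1} ≥ … ≥ m_{N−1} ≥ m_N := 0 be nonnegative integers. Put Y^{(j+1)} = ∏_{a=j+2}^{N−1} U(t^{a−1}_{m_{a−1}−m_a+1},…,t^{a−1}_{m_{a−1}}; t^a_1,…,t^a_{m_a}), Y^{(j)} = U(t^j_{m_j−m_{j+1}+1},…,t^j_{m_j}; t^{j+1}_1,…,t^{j+1}_{m_{j+1}}) · Y^{(j+1)}. Then Sym_{t^{j+1}_{1..m_{j+1}}}( [ Sym_{t^{j+2}_{1..m_{j+2}}}( ⋯ Sym_{t^{N−1}_{1..m_{N−1}}}(Y^{(j+1)}) ⋯ ) ] · [ ∘_{a=j+1}^{N−1} Sym_{t^{j+1}_{m_{j+1}−m_a+1 .. m_{j+1}−m_{a+1}}} ]( U(t^j_{m_j−m_{j+1}+1},…,t^j_{m_j}; t^{j+1}_1,…,t^{j+1}_{m_{j+1}}) ) ) = ∏_{a=j+1}^{N−1} (m_a − m_{a+1})! · Sym_{t̄^{j+1..N−1}}( Y^{(j)} ), where ∘_{a} denotes successive application of the q-symmetrizations over the indicated disjoint blocks of type-(j+1) variables,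 and Sym_{t̄^{j+1..N−1}} is the q-symmetrization over all variables of all types j+1,…,N−1 (the group ∏_{a=j+1}^{N−1} S_{m_a}). -/

import Mathlib

open scoped BigOperators
open MvPolynomial

noncomputable section

/-- The base field `ℂ(q)`. -/
abbrev F0 : Type := RatFunc ℂ

/-- The field `K` of rational functions over `ℂ(q)` in the variables `t^a_ℓ`,
indexed by pairs `(a, ℓ) : ℕ × ℕ`. -/
abbrev K2 : Type := FractionRing (MvPolynomial (ℕ × ℕ) F0)

/-- The element `q` of `K`. -/
def q2 : K2 := algebraMap (MvPolynomial (ℕ × ℕ) F0) _ (C RatFunc.X)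

/-- The variable `t^a_ℓ`. -/
def tV (a ℓ : ℕ) : K2 := algebraMap (MvPolynomial (ℕ × ℕ) F0) _ (X (a, ℓ))

/-- The interval `{lo+1, …, lo+k} ⊆ ℕ` identified with `Fin k`. -/
def intervalEquiv (lo k : ℕ) : Fin k ≃ {x : ℕ // lo + 1 ≤ x ∧ x < lo + 1 + k} where
  toFun i := ⟨lo + 1 + (i : ℕ), ⟨Nat.le_add_right _ _, by have := i.isLt; omega⟩⟩
  invFun x := ⟨(x : ℕ) - (lo + 1), by have := x.2; omega⟩
  left_inv i := Fin.ext (by simp)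
  right_inv x := Subtype.ext (by have := x.2; simp; omega)

/-- The permutation of `ℕ` acting as `σ` on the interval `{lo+1,…,lo+k}`
(sending `lo+1+i ↦ lo+1+σ(i)`) and as the identity elsewhere. -/
def intervalPerm (lo k : ℕ) (σ : Equiv.Perm (Fin k)) : Equiv.Perm ℕ :=
  σ.extendDomain (intervalEquiv lo k)

/-- The permutation of the variable indices permuting the second component of
variables of type `a` by `intervalPerm lo k σ`, fixing all other variables. -/
def blockPerm (a lo k : ℕ) (σ : Equiv.Perm (Fin k)) : Equiv.Perm (ℕ × ℕ) :=
  Equiv.prodShear (Equiv.refl ℕ)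
    (fun b => if b = a then intervalPerm lo k σ else Equiv.refl ℕ)

/-- The substitution field automorphism of `K` induced by a permutation
of the variable indices. -/
def liftP (e : Equiv.Perm (ℕ × ℕ)) : K2 ≃+* K2 :=
  IsFractionRing.ringEquivOfRingEquiv (MvPolynomial.renameEquiv F0 e).toRingEquiv

/-- The q-symmetrization over the group of variables `t^a_ℓ`, `lo < ℓ ≤ lo + k`. -/
def symBlock (a lo k : ℕ) (G : K2) : K2 :=
  ∑ σ : Equiv.Perm (Fin k),
    (∏ p ∈ Finset.univ.filter
        (fun p : Fin k × Fin k => p.1 < p.2 ∧ σ p.2 < σ p.1),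
      (q2 * tV a (lo + 1 + (σ p.2 : ℕ)) - q2⁻¹ * tV a (lo + 1 + (σ p.1 : ℕ))) /
        (q2⁻¹ * tV a (lo + 1 + (σ p.2 : ℕ)) - q2 * tV a (lo + 1 + (σ p.1 : ℕ)))) *
      liftP (blockPerm a lo k σ) G

/-- `U(x₁,…,x_k; y₁,…,y_k) = ∏_i (y_i/x_i)/(1−y_i/x_i) ·
∏_{m<n} (q⁻¹ − q·y_m/x_n)/(1 − y_m/x_n)` (for `1`-based families `x y : ℕ → K`). -/
def Ub (x y : ℕ → K2) (k : ℕ) : K2 :=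
  (∏ i ∈ Finset.range k, (y (i + 1) / x (i + 1)) / (1 - y (i + 1) / x (i + 1))) *
    ∏ p ∈ (Finset.range k ×ˢ Finset.range k).filter (fun p => p.1 < p.2),
      (q2⁻¹ - q2 * y (p.1 + 1) / x (p.2 + 1)) / (1 - y (p.1 + 1) / x (p.2 + 1))

/-- The composition of q-symmetrizations
`Sym_{t^{N−k}} ∘ ⋯ ∘ Sym_{t^{N−2}} ∘ Sym_{t^{N−1}}`, each over the full set of
variables `t^a_1,…,t^a_{m_a}` of its type. -/
def iterSym (N : ℕ) (m : ℕ → ℕ) : ℕ → K2 → K2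
  | 0, G => G
  | (k + 1), G => symBlock (N - 1 - k) 0 (m (N - 1 - k)) (iterSym N m k G)

/-- `Y^{(j+1)} = ∏_{a=j+2}^{N−1}
U(t^{a−1}_{m_{a−1}−m_a+1},…,t^{a−1}_{m_{a−1}}; t^a_1,…,t^a_{m_a})`. -/
def Ycur (N j : ℕ) (m : ℕ → ℕ) : K2 :=
  ∏ a ∈ Finset.Icc (j + 2) (N - 1),
    Ub (fun i => tV (a - 1) (m (a - 1) - m a + i)) (fun i => tV a i) (m a)

/-- `U(t^j_{m_j−m_{j+1}+1},…,t^j_{m_j}; t^{j+1}_1,…,t^{j+1}_{m_{j+1}})`. -/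
def Ucross (j : ℕ) (m : ℕ → ℕ) : K2 :=
  Ub (fun i => tV j (m j - m (j + 1) + i)) (fun i => tV (j + 1) i) (m (j + 1))

/-- The composition `Sym_{block_{j+1}} ∘ ⋯ ∘ Sym_{block_{N−1}}` of the
q-symmetrizations over the disjoint blocks
`{t^{j+1}_{m_{j+1}−m_a+1},…,t^{j+1}_{m_{j+1}−m_{a+1}}}`, `a = j+1,…,N−1`,
of type-`(j+1)` variables. -/
def iterBlk (N j : ℕ) (m : ℕ → ℕ) : ℕ → K2 → K2
  | 0, G => G
  | (k + 1), G =>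
      symBlock (j + 1) (m (j + 1) - m (N - 1 - k)) (m (N - 1 - k) - m (N - 1 - k + 1))
        (iterBlk N j m k G)

/-!
Conjugation by the product of `(q⁻¹ t_x - q t_y) / (t_x - t_y)` over the pairs `x < y` of a block
turns the q-symmetrization over that block into the plain symmetrization. Hence q-symmetrizing
`W * Sym_B G` over a set containing the block `B` gives `|B|!` times the q-symmetrization of
`W * G`, as soon as `W` is symmetric in the variables of `B`.

It remains to see that the nested q-symmetrization `W` of `Y^{(j+1)}` is symmetric in each block
of type-`(j+1)` variables. This goes by descending induction on `j`: by a two-variable identity,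
exchanging neighbours `x_i, x_{i+1}` in `U(x; y)` changes it by a function which, multiplied by
the weight above, is antisymmetric in `y_i, y_{i+1}`, and which the q-symmetrization over `y`
therefore kills against anything symmetric in `y_i, y_{i+1}`.
-/

section PairProducts

variable {M : Type*} [CommMonoid M]

lemma prod_lt_comp_perm {ι : Type*} [Fintype ι] [LinearOrder ι] (σ : Equiv.Perm ι)
    {f : ι → ι → M} (hf : ∀ i j, f i j = f j i) :
    ∏ p : ι × ι with p.1 < p.2, f (σ p.1) (σ p.2) = ∏ p : ι × ι with p.1 < p.2, f p.1 p.2 := by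
  refine Finset.prod_nbij' (fun p => (min (σ p.1) (σ p.2), max (σ p.1) (σ p.2)))
    (fun p => (min (σ.symm p.1) (σ.symm p.2), max (σ.symm p.1) (σ.symm p.2))) ?_ ?_ ?_ ?_ ?_
  · rintro ⟨i, j⟩ hij
    simpa [eq_comm] using (Finset.mem_filter.1 hij).2.ne
  · rintro ⟨i, j⟩ hij
    simpa [eq_comm] using (Finset.mem_filter.1 hij).2.ne
  · rintro ⟨i, j⟩ hij
    have hij : i < j := (Finset.mem_filter.1 hij).2
    rcases le_total (σ i) (σ j) with h | h <;> simp [h, hij.le]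
  · rintro ⟨i, j⟩ hij
    have hij : i < j := (Finset.mem_filter.1 hij).2
    rcases le_total (σ.symm i) (σ.symm j) with h | h <;> simp [h, hij.le]
  · rintro ⟨i, j⟩ -
    rcases le_total (σ i) (σ j) with h | h <;> simp [h, hf (σ i)]

/-- The pairs `x < y` of elements of the block `{lo + 1, …, lo + k}`. -/
def blockPairs (lo k : ℕ) : Finset (ℕ × ℕ) :=
  {p ∈ Finset.Ioc lo (lo + k) ×ˢ Finset.Ioc lo (lo + k) | p.1 < p.2}

lemma mem_blockPairs {lo k : ℕ} {p : ℕ × ℕ} :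
    p ∈ blockPairs lo k ↔ lo < p.1 ∧ p.1 < p.2 ∧ p.2 ≤ lo + k := by
  simp only [blockPairs, Finset.mem_filter, Finset.mem_product, Finset.mem_Ioc]
  omega

lemma prod_blockPairs_eq_prod_fin (lo k : ℕ) (f : ℕ → ℕ → M) :
    ∏ p ∈ blockPairs lo k, f p.1 p.2 =
      ∏ p : Fin k × Fin k with p.1 < p.2, f (lo + 1 + p.1) (lo + 1 + p.2) := by
  refine (Finset.prod_bij (fun p _ => (lo + 1 + (p.1 : ℕ), lo + 1 + (p.2 : ℕ)))
    ?_ ?_ ?_ fun _ _ => rfl).symm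
  · rintro ⟨i, j⟩ hij
    simp only [Finset.mem_filter, Finset.mem_univ, true_and, Fin.lt_def] at hij
    simp only [mem_blockPairs]
    omega
  · rintro ⟨i, j⟩ - ⟨i', j'⟩ - h
    simpa [Fin.ext_iff] using h
  · rintro ⟨x, y⟩ hxy
    simp only [mem_blockPairs] at hxy
    refine ⟨(⟨x - (lo + 1), by omega⟩, ⟨y - (lo + 1), by omega⟩), ?_, ?_⟩
    · simp only [Finset.mem_filter, Finset.mem_univ, true_and, Fin.mk_lt_mk]
      omega
    · simp only [Prod.mk.injEq]
      omega

variable {lo k i : ℕ}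

lemma mem_erase_blockPairs_swap_fst (hi : lo < i) (x y : ℕ) :
    (Equiv.swap i (i + 1) x, y) ∈ (blockPairs lo k).erase (i, i + 1) ↔
      (x, y) ∈ (blockPairs lo k).erase (i, i + 1) := by
  simp only [Finset.mem_erase, mem_blockPairs, ne_eq, Prod.mk.injEq, Equiv.swap_apply_def]
  split_ifs <;> omega

lemma mem_erase_blockPairs_swap_snd (hik : i < lo + k) (x y : ℕ) :
    (x, Equiv.swap i (i + 1) y) ∈ (blockPairs lo k).erase (i, i + 1) ↔
      (x, y) ∈ (blockPairs lo k).erase (i, i + 1) := by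
  simp only [Finset.mem_erase, mem_blockPairs, ne_eq, Prod.mk.injEq, Equiv.swap_apply_def]
  split_ifs <;> omega

lemma prod_erase_blockPairs_swap_fst (hi : lo < i) (f : ℕ → ℕ → M) :
    ∏ p ∈ (blockPairs lo k).erase (i, i + 1), f (Equiv.swap i (i + 1) p.1) p.2 =
      ∏ p ∈ (blockPairs lo k).erase (i, i + 1), f p.1 p.2 :=
  Finset.prod_equiv ((Equiv.swap i (i + 1)).prodCongr (Equiv.refl ℕ))
    (fun _ => (mem_erase_blockPairs_swap_fst hi _ _).symm) fun _ _ => rfl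

lemma prod_erase_blockPairs_swap_snd (hik : i < lo + k) (f : ℕ → ℕ → M) :
    ∏ p ∈ (blockPairs lo k).erase (i, i + 1), f p.1 (Equiv.swap i (i + 1) p.2) =
      ∏ p ∈ (blockPairs lo k).erase (i, i + 1), f p.1 p.2 :=
  Finset.prod_equiv ((Equiv.refl ℕ).prodCongr (Equiv.swap i (i + 1)))
    (fun _ => (mem_erase_blockPairs_swap_snd hik _ _).symm) fun _ _ => rfl

end PairProducts

section QFactor

variable {F : Type*} [Field F]

/-- The factor `(q⁻¹ x - q y) / (x - y)`, from which both the q-symmetrization weights and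
the functions `U` are built. -/
def qFactor (q x y : F) : F := (q⁻¹ * x - q * y) / (x - y)

lemma map_qFactor {E : Type*} [Field E] (f : F →+* E) (q x y : F) :
    f (qFactor q x y) = qFactor (f q) (f x) (f y) := by
  simp only [qFactor, map_div₀, map_sub, map_mul, map_inv₀]

lemma qFactor_flip {q x y : F} (h : q⁻¹ * y - q * x ≠ 0) :
    qFactor q x y = qFactor q y x * ((q * y - q⁻¹ * x) / (q⁻¹ * y - q * x)) := by
  rw [qFactor, qFactor, div_mul_div_comm, mul_comm (y - x), mul_div_mul_left _ _ h,
    ← neg_sub x y, div_neg, ← neg_div, neg_sub]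

/-- The two-variable function `U(x₁, x₂; y₁, y₂)`, over an arbitrary field and with
denominators cleared. -/
def pairU (q x₁ x₂ y₁ y₂ : F) : F :=
  y₁ / (x₁ - y₁) * (y₂ / (x₂ - y₂)) * qFactor q x₂ y₁

lemma map_pairU {E : Type*} [Field E] (f : F →+* E) (q x₁ x₂ y₁ y₂ : F) :
    f (pairU q x₁ x₂ y₁ y₂) = pairU (f q) (f x₁) (f x₂) (f y₁) (f y₂) := by
  simp only [pairU, map_mul, map_div₀, map_sub, map_qFactor]

lemma qFactor_mul_pairU_sub_antisymm {q x₁ x₂ y₁ y₂ : F} (h₁₁ : x₁ - y₁ ≠ 0)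
    (h₁₂ : x₁ - y₂ ≠ 0) (h₂₁ : x₂ - y₁ ≠ 0) (h₂₂ : x₂ - y₂ ≠ 0) :
    qFactor q y₂ y₁ * (pairU q x₁ x₂ y₂ y₁ - pairU q x₂ x₁ y₂ y₁) =
      -(qFactor q y₁ y₂ * (pairU q x₁ x₂ y₁ y₂ - pairU q x₂ x₁ y₁ y₂)) := by
  rcases eq_or_ne y₁ y₂ with rfl | hy
  · simp [qFactor]
  have hy₁₂ : y₁ - y₂ ≠ 0 := sub_ne_zero.2 hy
  have hy₂₁ : y₂ - y₁ = -(y₁ - y₂) := (neg_sub y₁ y₂).symm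
  simp only [qFactor, pairU, hy₂₁]
  generalize q⁻¹ = p
  field_simp
  ring

end QFactor

section VariablePermutations

lemma q2_ne_zero : q2 ≠ 0 := by
  simp [q2, RatFunc.X_ne_zero]

lemma tV_ne_zero (a x : ℕ) : tV a x ≠ 0 := by
  simp [tV]

lemma tV_sub_tV_ne_zero {a b x y : ℕ} (h : (a, x) ≠ (b, y)) : tV a x - tV b y ≠ 0 := by
  rw [tV, tV, sub_ne_zero, Ne, (IsFractionRing.injective _ K2).eq_iff, X_inj]
  exact h

lemma q2_inv_mul_tV_sub_ne_zero (a : ℕ) {x y : ℕ} (h : x ≠ y) :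
    q2⁻¹ * tV a x - q2 * tV a y ≠ 0 := by
  have h_poly : (X (a, x) - C RatFunc.X * C RatFunc.X * X (a, y) :
      MvPolynomial (ℕ × ℕ) F0) ≠ 0 := fun h₀ => by
    simpa [h.symm] using congrArg (eval (Pi.single (a, x) (1 : F0))) h₀
  have h_image : tV a x - q2 * q2 * tV a y ≠ 0 := by
    simpa only [tV, q2, ← map_mul, ← map_sub, Ne, IsFractionRing.to_map_eq_zero_iff] using h_poly
  have h_factor : tV a x - q2 * q2 * tV a y = q2 * (q2⁻¹ * tV a x - q2 * tV a y) := by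
    rw [mul_sub, mul_inv_cancel_left₀ q2_ne_zero, mul_assoc]
  exact right_ne_zero_of_mul (h_factor ▸ h_image)

lemma liftP_mul (e f : Equiv.Perm (ℕ × ℕ)) : liftP (e * f) = liftP e * liftP f := by
  have h_rename : (renameEquiv F0 (e * f)).toRingEquiv =
      (renameEquiv F0 e).toRingEquiv * (renameEquiv F0 f).toRingEquiv :=
    RingEquiv.ext fun p => (rename_rename f e p).symm
  rw [liftP, h_rename, ← IsFractionRing.ringEquivOfRingEquivHom_apply, map_mul]
  rfl

/-- The substitution `t^a_ℓ ↦ t^a_{τ(ℓ)}` in the variables of type `a`, as an action of the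
permutations of `ℕ` on `K`. -/
def typeAut (a : ℕ) : Equiv.Perm ℕ →* RingAut K2 :=
  MonoidHom.mk' (fun τ => liftP (Equiv.prodShear (Equiv.refl ℕ)
    fun b => if b = a then τ else Equiv.refl ℕ)) fun τ τ' => by
      rw [← liftP_mul]
      congr 1
      ext ⟨b, x⟩ <;> by_cases h : b = a <;> simp [h]

lemma typeAut_q2 (a : ℕ) (τ : Equiv.Perm ℕ) : typeAut a τ q2 = q2 := by
  simp [typeAut, liftP, q2]

lemma typeAut_tV (a : ℕ) (τ : Equiv.Perm ℕ) (b x : ℕ) :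
    typeAut a τ (tV b x) = tV b (if b = a then τ x else x) := by
  by_cases h : b = a <;> simp [typeAut, liftP, tV, h]

lemma typeAut_tV_self (a : ℕ) (τ : Equiv.Perm ℕ) (x : ℕ) :
    typeAut a τ (tV a x) = tV a (τ x) := by
  rw [typeAut_tV, if_pos rfl]

lemma typeAut_tV_of_ne {a b : ℕ} (h : b ≠ a) (τ : Equiv.Perm ℕ) (x : ℕ) :
    typeAut a τ (tV b x) = tV b x := by
  rw [typeAut_tV, if_neg h]

lemma typeAut_qFactor (a : ℕ) (τ : Equiv.Perm ℕ) (x y : K2) :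
    typeAut a τ (qFactor q2 x y) = qFactor q2 (typeAut a τ x) (typeAut a τ y) := by
  simpa only [RingHom.coe_coe, typeAut_q2] using map_qFactor (typeAut a τ : K2 →+* K2) q2 x y

lemma typeAut_pairU (a : ℕ) (τ : Equiv.Perm ℕ) (x₁ x₂ y₁ y₂ : K2) :
    typeAut a τ (pairU q2 x₁ x₂ y₁ y₂) =
      pairU q2 (typeAut a τ x₁) (typeAut a τ x₂) (typeAut a τ y₁) (typeAut a τ y₂) := by
  simpa only [RingHom.coe_coe, typeAut_q2] using
    map_pairU (typeAut a τ : K2 →+* K2) q2 x₁ x₂ y₁ y₂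

lemma typeAut_comm {a b : ℕ} (h : a ≠ b) (τ τ' : Equiv.Perm ℕ) (G : K2) :
    typeAut a τ (typeAut b τ' G) = typeAut b τ' (typeAut a τ G) := by
  suffices typeAut a τ * typeAut b τ' = typeAut b τ' * typeAut a τ from
    RingEquiv.congr_fun this G
  simp only [typeAut, MonoidHom.mk'_apply, ← liftP_mul]
  congr 1
  ext ⟨c, x⟩ <;> by_cases ha : c = a <;> by_cases hb : c = b <;> simp_all

end VariablePermutations

section Blocks

lemma exists_eq_add_of_mem_Ioc {lo k x : ℕ} (hx : x ∈ Set.Ioc lo (lo + k)) :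
    ∃ i : Fin k, x = lo + 1 + i :=
  ⟨⟨x - (lo + 1), by have := hx.1; have := hx.2; omega⟩, (Nat.add_sub_of_le hx.1).symm⟩

lemma intervalPerm_apply_add (lo k : ℕ) (σ : Equiv.Perm (Fin k)) (i : Fin k) :
    intervalPerm lo k σ (lo + 1 + i) = lo + 1 + σ i :=
  Equiv.Perm.extendDomain_apply_image σ (intervalEquiv lo k) i

lemma intervalPerm_apply_of_notMem {lo k : ℕ} (σ : Equiv.Perm (Fin k)) {x : ℕ}
    (hx : x ∉ Set.Ioc lo (lo + k)) : intervalPerm lo k σ x = x :=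
  Equiv.Perm.extendDomain_apply_not_subtype σ (intervalEquiv lo k)
    fun h => hx ⟨by omega, by omega⟩

lemma intervalPerm_mem_Ioc {lo k : ℕ} (σ : Equiv.Perm (Fin k)) {x : ℕ}
    (hx : x ∈ Set.Ioc lo (lo + k)) : intervalPerm lo k σ x ∈ Set.Ioc lo (lo + k) := by
  obtain ⟨i, rfl⟩ := exists_eq_add_of_mem_Ioc hx
  rw [intervalPerm_apply_add]
  constructor <;> omega

lemma exists_intervalPerm_eq {lo k : ℕ} {τ : Equiv.Perm ℕ}
    (hτ : ∀ x ∉ Set.Ioc lo (lo + k), τ x = x) : ∃ σ, intervalPerm lo k σ = τ := by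
  have h_support : ∀ x, τ x ≠ x → lo + 1 ≤ x ∧ x < lo + 1 + k := fun x hx => by
    have := Set.mem_Ioc.1 (not_not.1 (mt (hτ x) hx))
    omega
  have h_stable : ∀ x, (lo + 1 ≤ τ x ∧ τ x < lo + 1 + k) ↔ lo + 1 ≤ x ∧ x < lo + 1 + k :=
    fun x => by
      by_cases hx : τ x = x
      · rw [hx]
      · exact iff_of_true (h_support _ (τ.injective.ne hx)) (h_support x hx)
  refine ⟨(intervalEquiv lo k).symm.permCongr (τ.subtypePerm h_stable), Equiv.ext fun x => ?_⟩
  by_cases hx : lo + 1 ≤ x ∧ x < lo + 1 + k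
  · simp [intervalPerm, Equiv.Perm.extendDomain_apply_subtype _ (intervalEquiv lo k) hx]
  · rw [intervalPerm, Equiv.Perm.extendDomain_apply_not_subtype _ (intervalEquiv lo k) hx]
    exact (not_not.1 (mt (h_support x) hx)).symm

lemma intervalPerm_swap_castSucc_succ (lo k : ℕ) (i : Fin k) :
    intervalPerm lo (k + 1) (Equiv.swap i.castSucc i.succ) =
      Equiv.swap (lo + 1 + i) (lo + 1 + i + 1) := by
  ext x
  by_cases hx : x ∈ Set.Ioc lo (lo + (k + 1))
  · obtain ⟨l, rfl⟩ := exists_eq_add_of_mem_Ioc hx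
    rw [intervalPerm_apply_add]
    simp only [Equiv.swap_apply_def, Fin.ext_iff, Fin.val_castSucc, Fin.val_succ]
    split_ifs <;> (try simp only [Fin.val_castSucc, Fin.val_succ]) <;> omega
  · rw [intervalPerm_apply_of_notMem _ hx]
    rw [Set.mem_Ioc] at hx
    exact (Equiv.swap_apply_of_ne_of_ne (by omega) (by omega)).symm

/-- The action of `S_k` on `K` permuting the variables `t^a_ℓ`, `lo < ℓ ≤ lo + k`. -/
def blockAut (a lo k : ℕ) : Equiv.Perm (Fin k) →* RingAut K2 :=
  (typeAut a).comp (Equiv.Perm.extendDomainHom (intervalEquiv lo k))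

lemma blockAut_apply (a lo k : ℕ) (σ : Equiv.Perm (Fin k)) :
    blockAut a lo k σ = typeAut a (intervalPerm lo k σ) :=
  rfl

lemma liftP_blockPerm (a lo k : ℕ) (σ : Equiv.Perm (Fin k)) :
    liftP (blockPerm a lo k σ) = blockAut a lo k σ :=
  rfl

lemma sum_blockAut_typeAut {a lo k : ℕ} {τ : Equiv.Perm ℕ}
    (hτ : ∀ x ∉ Set.Ioc lo (lo + k), τ x = x) (G : K2) :
    ∑ σ, blockAut a lo k σ (typeAut a τ G) = ∑ σ, blockAut a lo k σ G := by
  obtain ⟨ρ, rfl⟩ := exists_intervalPerm_eq hτ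
  exact Fintype.sum_equiv (Equiv.mulRight ρ) _ _ fun σ => by
    rw [Equiv.coe_mulRight, map_mul, RingAut.mul_apply, blockAut_apply a lo k ρ]

/-- `G` is a symmetric function of the variables `t^a_ℓ`, `lo < ℓ ≤ lo + k`. -/
def IsBlockSymmetric (a lo k : ℕ) (G : K2) : Prop :=
  ∀ σ, blockAut a lo k σ G = G

lemma IsBlockSymmetric.typeAut_eq {a lo k : ℕ} {G : K2} (hG : IsBlockSymmetric a lo k G)
    {τ : Equiv.Perm ℕ} (hτ : ∀ x ∉ Set.Ioc lo (lo + k), τ x = x) : typeAut a τ G = G := by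
  obtain ⟨σ, rfl⟩ := exists_intervalPerm_eq hτ
  exact hG σ

lemma isBlockSymmetric_of_swap {a lo k : ℕ} {G : K2}
    (hG : ∀ i, lo < i → i < lo + k → typeAut a (Equiv.swap i (i + 1)) G = G) :
    IsBlockSymmetric a lo k G := by
  intro σ
  cases k with
  | zero => rw [Subsingleton.elim σ 1, map_one, RingAut.one_apply]
  | succ k =>
    have hσ : σ ∈ Submonoid.closure (Set.range fun i : Fin k ↦ Equiv.swap i.castSucc i.succ) := by
      rw [Equiv.Perm.mclosure_swap_castSucc_succ]
      trivial
    induction hσ using Submonoid.closure_induction with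
    | mem _ h =>
      obtain ⟨i, rfl⟩ := h
      rw [blockAut_apply, intervalPerm_swap_castSucc_succ]
      exact hG _ (by omega) (by omega)
    | one => rw [map_one, RingAut.one_apply]
    | mul σ τ _ _ hσ hτ => rw [map_mul, RingAut.mul_apply, hτ, hσ]

end Blocks

section QSymmetrization

/-- The product of `(q⁻¹ t^a_x - q t^a_y) / (t^a_x - t^a_y)` over `lo < x < y ≤ lo + k`.
Conjugation by it turns the q-symmetrization into the plain symmetrization. -/
def weight (a lo k : ℕ) : K2 :=
  ∏ p ∈ blockPairs lo k, qFactor q2 (tV a p.1) (tV a p.2)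

lemma weight_ne_zero (a lo k : ℕ) : weight a lo k ≠ 0 :=
  Finset.prod_ne_zero_iff.2 fun p hp => by
    have hp : p.1 ≠ p.2 := (mem_blockPairs.1 hp).2.1.ne
    exact div_ne_zero (q2_inv_mul_tV_sub_ne_zero a hp) (tV_sub_tV_ne_zero (by simpa using hp))

lemma weight_mul_prod_inversions (a lo k : ℕ) (σ : Equiv.Perm (Fin k)) :
    weight a lo k * ∏ p : Fin k × Fin k with p.1 < p.2 ∧ σ p.2 < σ p.1,
      (q2 * tV a (lo + 1 + σ p.2) - q2⁻¹ * tV a (lo + 1 + σ p.1)) /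
        (q2⁻¹ * tV a (lo + 1 + σ p.2) - q2 * tV a (lo + 1 + σ p.1)) =
      blockAut a lo k σ (weight a lo k) := by
  let t (i : Fin k) : K2 := tV a (lo + 1 + i)
  let sortedFactor (i j : Fin k) : K2 := qFactor q2 (t (min i j)) (t (max i j))
  have h_weight : weight a lo k =
      ∏ p : Fin k × Fin k with p.1 < p.2, sortedFactor (σ p.1) (σ p.2) := by
    rw [prod_lt_comp_perm σ fun i j => by simp only [sortedFactor, min_comm, max_comm],
      weight, prod_blockPairs_eq_prod_fin lo k fun x y => qFactor q2 (tV a x) (tV a y)]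
    refine Finset.prod_congr rfl fun p hp => ?_
    have hp : p.1 < p.2 := (Finset.mem_filter.1 hp).2
    simp only [sortedFactor, min_eq_left hp.le, max_eq_right hp.le, t]
  have h_image : blockAut a lo k σ (weight a lo k) =
      ∏ p : Fin k × Fin k with p.1 < p.2, qFactor q2 (t (σ p.1)) (t (σ p.2)) := by
    rw [weight, prod_blockPairs_eq_prod_fin lo k fun x y => qFactor q2 (tV a x) (tV a y)]
    simp only [map_prod, blockAut_apply, typeAut_qFactor, typeAut_tV_self,
      intervalPerm_apply_add, t]
  rw [h_image, h_weight, ← Finset.filter_filter,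
    Finset.prod_filter (fun p : Fin k × Fin k => σ p.2 < σ p.1), ← Finset.prod_mul_distrib]
  refine Finset.prod_congr rfl fun p hp => ?_
  have hp : σ p.1 ≠ σ p.2 := σ.injective.ne (Finset.mem_filter.1 hp).2.ne
  rcases hp.lt_or_gt with h | h
  · simp only [sortedFactor, min_eq_left h.le, max_eq_right h.le, if_neg h.asymm, mul_one]
  · have h_ne : lo + 1 + (σ p.2 : ℕ) ≠ lo + 1 + σ p.1 := (Nat.add_lt_add_left h _).ne
    simp only [sortedFactor, min_eq_right h.le, max_eq_left h.le, if_pos h]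
    exact (qFactor_flip (q2_inv_mul_tV_sub_ne_zero a h_ne)).symm

lemma symBlock_eq_weight_inv_mul_sum (a lo k : ℕ) (G : K2) :
    symBlock a lo k G =
      (weight a lo k)⁻¹ * ∑ σ, blockAut a lo k σ (weight a lo k * G) := by
  rw [symBlock, Finset.mul_sum]
  refine Finset.sum_congr rfl fun σ _ => ?_
  rw [map_mul, ← weight_mul_prod_inversions, mul_assoc,
    inv_mul_cancel_left₀ (weight_ne_zero a lo k), liftP_blockPerm]

lemma weight_mul_symBlock (a lo k : ℕ) (G : K2) :
    weight a lo k * symBlock a lo k G = ∑ σ, blockAut a lo k σ (weight a lo k * G) := by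
  rw [symBlock_eq_weight_inv_mul_sum, mul_inv_cancel_left₀ (weight_ne_zero a lo k)]

lemma symBlock_sub (a lo k : ℕ) (G H : K2) :
    symBlock a lo k (G - H) = symBlock a lo k G - symBlock a lo k H := by
  simp only [symBlock, map_sub, mul_sub, Finset.sum_sub_distrib]

lemma symBlock_mul_of_isBlockSymmetric {a lo k : ℕ} {W : K2} (hW : IsBlockSymmetric a lo k W)
    (G : K2) : symBlock a lo k (W * G) = W * symBlock a lo k G := by
  simp only [symBlock, liftP_blockPerm, map_mul, hW _, Finset.mul_sum, mul_left_comm]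

lemma typeAut_weight_of_ne {a c : ℕ} (h : a ≠ c) (τ : Equiv.Perm ℕ) (lo k : ℕ) :
    typeAut c τ (weight a lo k) = weight a lo k := by
  simp only [weight, map_prod, typeAut_qFactor, typeAut_tV_of_ne h]

lemma typeAut_symBlock_of_ne {a c : ℕ} (h : a ≠ c) (τ : Equiv.Perm ℕ) (lo k : ℕ) (G : K2) :
    typeAut c τ (symBlock a lo k G) = symBlock a lo k (typeAut c τ G) := by
  simp only [symBlock_eq_weight_inv_mul_sum, map_mul, map_inv₀, map_sum, typeAut_weight_of_ne h,
    blockAut_apply, typeAut_comm h.symm]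

instance : CharZero K2 :=
  have : CharZero (MvPolynomial (ℕ × ℕ) F0) :=
    charZero_of_injective_algebraMap (C_injective (ℕ × ℕ) F0)
  charZero_of_injective_algebraMap (IsFractionRing.injective (MvPolynomial (ℕ × ℕ) F0) K2)

lemma symBlock_eq_zero_of_antisymm {a lo k : ℕ} {τ : Equiv.Perm ℕ}
    (hτ : ∀ x ∉ Set.Ioc lo (lo + k), τ x = x) {G : K2}
    (hG : typeAut a τ (weight a lo k * G) = -(weight a lo k * G)) : symBlock a lo k G = 0 := by
  have h_sum := sum_blockAut_typeAut (a := a) hτ (weight a lo k * G)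
  simp only [hG, map_neg, Finset.sum_neg_distrib] at h_sum
  rw [symBlock_eq_weight_inv_mul_sum, neg_eq_self.1 h_sum, mul_zero]

lemma isBlockSymmetric_weight_div_weight {a lo k lo' k' : ℕ} (hlo : lo ≤ lo')
    (hk : lo' + k' ≤ lo + k) :
    IsBlockSymmetric a lo' k' (weight a lo k / weight a lo' k') := by
  intro σ
  have h_sub : blockPairs lo' k' ⊆ blockPairs lo k := fun p hp => by
    rw [mem_blockPairs] at hp ⊢
    omega
  have h_div : weight a lo k / weight a lo' k' =
      ∏ p ∈ blockPairs lo k \ blockPairs lo' k', qFactor q2 (tV a p.1) (tV a p.2) := by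
    rw [div_eq_iff (weight_ne_zero a lo' k'), weight, weight, Finset.prod_sdiff h_sub]
  have h_block : ∀ x, (x ∈ Set.Ioc lo' (lo' + k') ∧ intervalPerm lo' k' σ x ∈
      Set.Ioc lo' (lo' + k')) ∨ (x ∉ Set.Ioc lo' (lo' + k') ∧ intervalPerm lo' k' σ x = x) :=
    fun x => (em (x ∈ Set.Ioc lo' (lo' + k'))).imp (fun hx => ⟨hx, intervalPerm_mem_Ioc σ hx⟩)
      fun hx => ⟨hx, intervalPerm_apply_of_notMem σ hx⟩
  simp only [h_div, map_prod, blockAut_apply, typeAut_qFactor, typeAut_tV_self]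
  refine Finset.prod_equiv ((intervalPerm lo' k' σ).prodCongr (intervalPerm lo' k' σ))
    (fun ⟨x, y⟩ => ?_) fun _ _ => rfl
  have hx := h_block x
  have hy := h_block y
  simp only [Set.mem_Ioc] at hx hy
  simp only [Finset.mem_sdiff, mem_blockPairs, Equiv.prodCongr_apply, Prod.map_apply]
  omega

lemma weight_mul_symBlock_subblock {a lo k lo' k' : ℕ} (hlo : lo ≤ lo')
    (hk : lo' + k' ≤ lo + k) (G : K2) :
    weight a lo k * symBlock a lo' k' G = ∑ σ, blockAut a lo' k' σ (weight a lo k * G) := by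
  have h_split : weight a lo k = weight a lo k / weight a lo' k' * weight a lo' k' :=
    (div_mul_cancel₀ _ (weight_ne_zero a lo' k')).symm
  rw [h_split, mul_assoc, weight_mul_symBlock, Finset.mul_sum]
  refine Finset.sum_congr rfl fun σ _ => ?_
  rw [mul_assoc, map_mul _ (weight a lo k / _), isBlockSymmetric_weight_div_weight hlo hk]

lemma symBlock_symBlock_subblock {a lo k lo' k' : ℕ} (hlo : lo ≤ lo')
    (hk : lo' + k' ≤ lo + k) (G : K2) :
    symBlock a lo k (symBlock a lo' k' G) = (k'.factorial : K2) * symBlock a lo k G := by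
  have h_fixed (τ : Equiv.Perm (Fin k')) (x : ℕ) (hx : x ∉ Set.Ioc lo (lo + k)) :
      intervalPerm lo' k' τ x = x :=
    intervalPerm_apply_of_notMem τ fun h => hx ⟨by have := h.1; omega, by have := h.2; omega⟩
  have h_sum : ∑ σ, blockAut a lo k σ (weight a lo k * symBlock a lo' k' G) =
      (k'.factorial : K2) * ∑ σ, blockAut a lo k σ (weight a lo k * G) := by
    simp only [weight_mul_symBlock_subblock hlo hk, map_sum]
    rw [Finset.sum_comm]
    simp only [blockAut_apply a lo' k', sum_blockAut_typeAut (h_fixed _), Finset.sum_const,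
      Finset.card_univ, Fintype.card_perm, Fintype.card_fin, nsmul_eq_mul]
  rw [symBlock_eq_weight_inv_mul_sum, h_sum, symBlock_eq_weight_inv_mul_sum a lo k G,
    mul_left_comm]

lemma symBlock_mul_symBlock_subblock {a lo k lo' k' : ℕ} (hlo : lo ≤ lo')
    (hk : lo' + k' ≤ lo + k) {W : K2} (hW : IsBlockSymmetric a lo' k' W) (G : K2) :
    symBlock a lo k (W * symBlock a lo' k' G) =
      (k'.factorial : K2) * symBlock a lo k (W * G) := by
  rw [← symBlock_mul_of_isBlockSymmetric hW, symBlock_symBlock_subblock hlo hk]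

end QSymmetrization

section Exchange

lemma typeAut_Ub (c : ℕ) (τ : Equiv.Perm ℕ) (x y : ℕ → K2) (k : ℕ) :
    typeAut c τ (Ub x y k) = Ub (fun l => typeAut c τ (x l)) (fun l => typeAut c τ (y l)) k := by
  simp only [Ub, map_mul, map_prod, map_div₀, map_sub, map_one, map_inv₀, typeAut_q2]

lemma Ub_eq_prod_mul_prod_qFactor {x : ℕ → K2} (hx : ∀ l, x l ≠ 0) (y : ℕ → K2) (k : ℕ) :
    Ub x y k = (∏ l ∈ Finset.Ioc 0 k, y l / (x l - y l)) *
      ∏ p ∈ blockPairs 0 k, qFactor q2 (x p.2) (y p.1) := by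
  rw [Ub]
  congr 1
  · refine Finset.prod_nbij' (· + 1) (· - 1) ?_ ?_ ?_ ?_ fun l _ => ?_
    on_goal 5 => rw [one_sub_div (hx _), div_div_div_cancel_right₀ (hx _)]
    all_goals
      simp only [Finset.mem_range, Finset.mem_Ioc]
      omega
  · refine Finset.prod_nbij' (fun p => (p.1 + 1, p.2 + 1)) (fun p => (p.1 - 1, p.2 - 1))
      ?_ ?_ ?_ ?_ fun p _ => ?_
    on_goal 5 =>
      rw [one_sub_div (hx _), ← mul_div_mul_right _ _ (hx (p.2 + 1)), sub_mul,
        div_mul_cancel₀ _ (hx _), div_mul_cancel₀ _ (hx _), qFactor]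
    all_goals
      simp only [Finset.mem_filter, Finset.mem_product, Finset.mem_range, mem_blockPairs,
        Prod.forall, Prod.mk.injEq]
      omega

/-- The cofactor in `U(x; y)` of the two-variable function of `x_i, x_{i+1}; y_i, y_{i+1}`. -/
def UbRest (x y : ℕ → K2) (k i : ℕ) : K2 :=
  (∏ l ∈ Finset.Ioc 0 k \ {i, i + 1}, y l / (x l - y l)) *
    ∏ p ∈ (blockPairs 0 k).erase (i, i + 1), qFactor q2 (x p.2) (y p.1)

lemma typeAut_UbRest (c : ℕ) (τ : Equiv.Perm ℕ) (x y : ℕ → K2) (k i : ℕ) :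
    typeAut c τ (UbRest x y k i) =
      UbRest (fun l => typeAut c τ (x l)) (fun l => typeAut c τ (y l)) k i := by
  simp only [UbRest, map_mul, map_prod, map_div₀, map_sub, typeAut_qFactor]

variable {k i : ℕ}

lemma Ub_eq_pairU_mul_UbRest {x : ℕ → K2} (hx : ∀ l, x l ≠ 0) (y : ℕ → K2) (hi : 0 < i)
    (hik : i < k) :
    Ub x y k = pairU q2 (x i) (x (i + 1)) (y i) (y (i + 1)) * UbRest x y k i := by
  have h_sub : {i, i + 1} ⊆ Finset.Ioc 0 k := fun l => by
    simp only [Finset.mem_insert, Finset.mem_singleton, Finset.mem_Ioc]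
    omega
  have h_mem : (i, i + 1) ∈ blockPairs 0 k := by
    simp only [mem_blockPairs]
    omega
  rw [Ub_eq_prod_mul_prod_qFactor hx, ← Finset.prod_sdiff h_sub, Finset.prod_pair (by simp),
    ← Finset.mul_prod_erase _ _ h_mem, pairU, UbRest]
  ring

lemma UbRest_comp_swap_left (x y : ℕ → K2) (hik : i < k) :
    UbRest (fun l => x (Equiv.swap i (i + 1) l)) y k i = UbRest x y k i := by
  rw [UbRest, prod_erase_blockPairs_swap_snd (by omega) fun l n => qFactor q2 (x n) (y l), UbRest]
  congr 1
  refine Finset.prod_congr rfl fun l hl => ?_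
  simp only [Finset.mem_sdiff, Finset.mem_insert, Finset.mem_singleton, not_or] at hl
  rw [Equiv.swap_apply_of_ne_of_ne hl.2.1 hl.2.2]

lemma UbRest_comp_swap_right (x y : ℕ → K2) (hi : 0 < i) :
    UbRest x (fun l => y (Equiv.swap i (i + 1) l)) k i = UbRest x y k i := by
  rw [UbRest, prod_erase_blockPairs_swap_fst hi fun l n => qFactor q2 (x n) (y l), UbRest]
  congr 1
  refine Finset.prod_congr rfl fun l hl => ?_
  simp only [Finset.mem_sdiff, Finset.mem_insert, Finset.mem_singleton, not_or] at hl
  rw [Equiv.swap_apply_of_ne_of_ne hl.2.1 hl.2.2]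

lemma exists_weight_eq_qFactor_mul (c : ℕ) (hi : 0 < i) (hik : i < k) :
    ∃ R, weight c 0 k = qFactor q2 (tV c i) (tV c (i + 1)) * R ∧
      typeAut c (Equiv.swap i (i + 1)) R = R := by
  have h_mem : (i, i + 1) ∈ blockPairs 0 k := by
    simp only [mem_blockPairs]
    omega
  refine ⟨_, (Finset.mul_prod_erase _ _ h_mem).symm, ?_⟩
  simp only [map_prod, typeAut_qFactor, typeAut_tV_self]
  rw [prod_erase_blockPairs_swap_fst hi fun x y =>
      qFactor q2 (tV c x) (tV c (Equiv.swap i (i + 1) y)),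
    prod_erase_blockPairs_swap_snd (by omega) fun x y => qFactor q2 (tV c x) (tV c y)]

lemma swap_add_left_apply (d i l : ℕ) :
    Equiv.swap (d + i) (d + i + 1) (d + l) = d + Equiv.swap i (i + 1) l := by
  simp only [Equiv.swap_apply_def]
  split_ifs <;> omega

lemma typeAut_swap_weight_mul_Ub_sub {b c : ℕ} (hbc : b ≠ c) (d : ℕ) (hi : 0 < i)
    (hik : i < k) :
    let U := Ub (fun l => tV b (d + l)) (tV c) k
    let D := weight c 0 k * (U - typeAut b (Equiv.swap (d + i) (d + i + 1)) U)
    typeAut c (Equiv.swap i (i + 1)) D = -D := by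
  intro U D
  let x (l : ℕ) : K2 := tV b (d + l)
  have h_ne (l n : ℕ) : x l - tV c n ≠ 0 := tV_sub_tV_ne_zero (by simp [hbc])
  obtain ⟨R, hR, hR_swap⟩ := exists_weight_eq_qFactor_mul c hi hik
  have hU : U = pairU q2 (x i) (x (i + 1)) (tV c i) (tV c (i + 1)) * UbRest x (tV c) k i :=
    Ub_eq_pairU_mul_UbRest (fun _ => tV_ne_zero _ _) _ hi hik
  have hU_swap : typeAut b (Equiv.swap (d + i) (d + i + 1)) U =
      pairU q2 (x (i + 1)) (x i) (tV c i) (tV c (i + 1)) * UbRest x (tV c) k i := by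
    simp only [U, typeAut_Ub, typeAut_tV_self, typeAut_tV_of_ne hbc.symm, swap_add_left_apply]
    rw [Ub_eq_pairU_mul_UbRest (fun _ => tV_ne_zero _ _) _ hi hik, UbRest_comp_swap_left x _ hik,
      Equiv.swap_apply_left, Equiv.swap_apply_right]
  have h_rest : typeAut c (Equiv.swap i (i + 1)) (UbRest x (tV c) k i) = UbRest x (tV c) k i := by
    simp only [typeAut_UbRest, x, typeAut_tV_self, typeAut_tV_of_ne hbc]
    exact UbRest_comp_swap_right x (tV c) hi
  have h_pair (x₁ x₂ : ℕ) : typeAut c (Equiv.swap i (i + 1))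
      (pairU q2 (x x₁) (x x₂) (tV c i) (tV c (i + 1))) =
      pairU q2 (x x₁) (x x₂) (tV c (i + 1)) (tV c i) := by
    simp only [typeAut_pairU, x, typeAut_tV_self, typeAut_tV_of_ne hbc, Equiv.swap_apply_left,
      Equiv.swap_apply_right]
  have h_antisymm := qFactor_mul_pairU_sub_antisymm (q := q2) (h_ne i i) (h_ne i (i + 1))
    (h_ne (i + 1) i) (h_ne (i + 1) (i + 1))
  simp only [D, hU_swap]
  simp only [hU, hR, map_mul, map_sub, h_pair, h_rest, hR_swap, typeAut_qFactor, typeAut_tV_self,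
    Equiv.swap_apply_left, Equiv.swap_apply_right]
  linear_combination R * UbRest x (tV c) k i * h_antisymm

lemma typeAut_swap_symBlock_Ub_mul {b c : ℕ} (hbc : b ≠ c) (d : ℕ) (hi : 0 < i) (hik : i < k)
    {W : K2} (hWb : typeAut b (Equiv.swap (d + i) (d + i + 1)) W = W)
    (hWc : typeAut c (Equiv.swap i (i + 1)) W = W) :
    typeAut b (Equiv.swap (d + i) (d + i + 1))
        (symBlock c 0 k (Ub (fun l => tV b (d + l)) (tV c) k * W)) =
      symBlock c 0 k (Ub (fun l => tV b (d + l)) (tV c) k * W) := by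
  rw [typeAut_symBlock_of_ne hbc.symm, map_mul, hWb, eq_comm, ← sub_eq_zero, ← symBlock_sub,
    ← sub_mul]
  refine symBlock_eq_zero_of_antisymm (τ := Equiv.swap i (i + 1)) (fun l hl => ?_) ?_
  · rw [Set.mem_Ioc] at hl
    exact Equiv.swap_apply_of_ne_of_ne (by omega) (by omega)
  · rw [← mul_assoc, map_mul, typeAut_swap_weight_mul_Ub_sub hbc d hi hik, hWc, neg_mul]

end Exchange

section NestedSymmetrization

variable {N j n : ℕ} {m : ℕ → ℕ}

lemma Ycur_eq_Ucross_mul (h : j + 2 < N) (m : ℕ → ℕ) :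
    Ycur N j m = Ucross (j + 1) m * Ycur N (j + 1) m := by
  have h_Icc : Finset.Icc (j + 2) (N - 1) = insert (j + 2) (Finset.Icc (j + 3) (N - 1)) :=
    (Finset.insert_Icc_add_one_left_eq_Icc (by omega)).symm
  rw [Ycur, h_Icc, Finset.prod_insert (by simp)]
  rfl

lemma typeAut_Ucross_of_ne {b c : ℕ} (hb : b ≠ c) (hb' : b + 1 ≠ c) (τ : Equiv.Perm ℕ)
    (m : ℕ → ℕ) : typeAut c τ (Ucross b m) = Ucross b m := by
  simp only [Ucross, typeAut_Ub, typeAut_tV_of_ne hb, typeAut_tV_of_ne hb']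

lemma typeAut_Ucross_of_fixed {b : ℕ} {τ : Equiv.Perm ℕ}
    (hτ : ∀ l, m b - m (b + 1) < l → τ l = l) : typeAut b τ (Ucross b m) = Ucross b m := by
  rw [Ucross, typeAut_Ub]
  simp only [typeAut_tV_self, typeAut_tV_of_ne b.succ_ne_self, Ub,
    hτ _ (Nat.lt_add_of_pos_right (Nat.succ_pos _))]

lemma typeAut_Ycur_of_le {c : ℕ} (hc : c ≤ j) (τ : Equiv.Perm ℕ) (N : ℕ) (m : ℕ → ℕ) :
    typeAut c τ (Ycur N j m) = Ycur N j m := by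
  rw [Ycur, map_prod]
  refine Finset.prod_congr rfl fun a ha => ?_
  have ha := (Finset.mem_Icc.1 ha).1
  have h_pred : a - 1 ≠ c := by omega
  have h_self : a ≠ c := by omega
  simp only [typeAut_Ub, typeAut_tV_of_ne h_pred, typeAut_tV_of_ne h_self]

lemma typeAut_iterSym {c : ℕ} (hc : c + n < N) (τ : Equiv.Perm ℕ) (m : ℕ → ℕ) (G : K2) :
    typeAut c τ (iterSym N m n G) = iterSym N m n (typeAut c τ G) := by
  induction n with
  | zero => rfl
  | succ n ih => rw [iterSym, iterSym, typeAut_symBlock_of_ne (by omega), ih (by omega)]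

lemma iterSym_mul_of_isBlockSymmetric (hn : n ≤ N) {W : K2}
    (hW : ∀ c, N ≤ c + n → c < N → IsBlockSymmetric c 0 (m c) W) (G : K2) :
    iterSym N m n (W * G) = W * iterSym N m n G := by
  induction n with
  | zero => rfl
  | succ n ih =>
    rw [iterSym, iterSym, ih (by omega) fun c hc => hW c (by omega),
      symBlock_mul_of_isBlockSymmetric (hW _ (by omega) (by omega))]

lemma iterSym_succ_mul_of_isBlockSymmetric (hN : j + 1 + n + 1 = N) {W : K2}
    (hW : ∀ c, j + 1 < c → c < N → IsBlockSymmetric c 0 (m c) W) (G : K2) :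
    iterSym N m (n + 1) (W * G) =
      symBlock (j + 1) 0 (m (j + 1)) (W * iterSym N m n G) := by
  have h_type : N - 1 - n = j + 1 := by omega
  rw [iterSym, h_type, iterSym_mul_of_isBlockSymmetric (by omega) fun c hc => hW c (by omega)]

lemma iterSym_succ_Ycur (hN : j + 2 + (n + 1) = N) (m : ℕ → ℕ) :
    iterSym N m (n + 1) (Ycur N j m) =
      symBlock (j + 2) 0 (m (j + 2)) (Ucross (j + 1) m * iterSym N m n (Ycur N (j + 1) m)) := by
  rw [Ycur_eq_Ucross_mul (by omega), iterSym_succ_mul_of_isBlockSymmetric (j := j + 1) (by omega)]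
  exact fun c hc _ _ => typeAut_Ucross_of_ne (by omega) (by omega) _ _

lemma isBlockSymmetric_iterSym_Ycur (hN : j + 2 + n = N) (hm : AntitoneOn m (Set.Icc (j + 1) N))
    {a : ℕ} (hja : j + 1 ≤ a) (haN : a < N) :
    IsBlockSymmetric (j + 1) (m (j + 1) - m a) (m a - m (a + 1))
      (iterSym N m n (Ycur N j m)) := by
  induction n generalizing j with
  | zero =>
    have hY : Ycur N j m = 1 := by rw [Ycur, Finset.Icc_eq_empty (by omega), Finset.prod_empty]
    exact fun σ => by rw [iterSym, hY, map_one]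
  | succ n ih =>
    have hV (τ : Equiv.Perm ℕ) : typeAut (j + 1) τ (iterSym N m n (Ycur N (j + 1) m)) =
        iterSym N m n (Ycur N (j + 1) m) := by
      rw [typeAut_iterSym (by omega), typeAut_Ycur_of_le le_rfl]
    rw [iterSym_succ_Ycur hN]
    rcases hja.eq_or_lt with rfl | hja
    · intro σ
      have hU : typeAut (j + 1) (intervalPerm (m (j + 1) - m (j + 1))
          (m (j + 1) - m (j + 1 + 1)) σ) (Ucross (j + 1) m) = Ucross (j + 1) m :=
        typeAut_Ucross_of_fixed fun l hl =>
          intervalPerm_apply_of_notMem σ fun h => by have := h.2; omega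
      rw [blockAut_apply, typeAut_symBlock_of_ne (by omega), map_mul, hU, hV]
    · have hm_le : m a ≤ m (j + 2) := hm ⟨by omega, by omega⟩ ⟨by omega, by omega⟩ hja
      have hm_le' : m (j + 2) ≤ m (j + 1) :=
        hm ⟨by omega, by omega⟩ ⟨by omega, by omega⟩ (by omega)
      have h_symm : IsBlockSymmetric (j + 2) (m (j + 2) - m a) (m a - m (a + 1))
          (iterSym N m n (Ycur N (j + 1) m)) :=
        ih (by omega) (hm.mono (Set.Icc_subset_Icc_left (by omega))) hja
      refine isBlockSymmetric_of_swap fun i hi hi' => ?_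
      obtain ⟨i, rfl⟩ : ∃ i', i = m (j + 1) - m (j + 2) + i' :=
        Nat.exists_eq_add_of_le (by omega)
      refine typeAut_swap_symBlock_Ub_mul (by omega) _ (by omega) (by omega) (hV _)
        (h_symm.typeAut_eq fun l hl => ?_)
      rw [Set.mem_Ioc] at hl
      exact Equiv.swap_apply_of_ne_of_ne (by omega) (by omega)

lemma symBlock_mul_iterBlk (hm : AntitoneOn m (Set.Icc (j + 1) N)) {W : K2}
    (hW : ∀ a, j + 1 ≤ a → a < N →
      IsBlockSymmetric (j + 1) (m (j + 1) - m a) (m a - m (a + 1)) W) (G : K2)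
    (hn : j + 1 + n ≤ N) :
    symBlock (j + 1) 0 (m (j + 1)) (W * iterBlk N j m n G) =
      ((∏ a ∈ Finset.Ico (N - n) N, (m a - m (a + 1)).factorial : ℕ) : K2) *
        symBlock (j + 1) 0 (m (j + 1)) (W * G) := by
  induction n with
  | zero => simp [iterBlk]
  | succ n ih =>
    obtain ⟨a, ha⟩ : ∃ a, N = a + 1 + n := ⟨N - 1 - n, by omega⟩
    have haN : a < N := by omega
    have h_type : N - 1 - n = a := by omega
    have h_start : N - (n + 1) = a := by omega
    have h_next : N - n = a + 1 := by omega
    have hm_le : m a ≤ m (j + 1) := hm ⟨by omega, by omega⟩ ⟨by omega, by omega⟩ (by omega)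
    rw [iterBlk, h_type, symBlock_mul_symBlock_subblock (Nat.zero_le _) (by omega)
      (hW a (by omega) haN), ih (by omega), h_next, h_start,
      Finset.prod_eq_prod_Ico_succ_bot haN, Nat.cast_mul, mul_assoc]

end NestedSymmetrization

theorem statement11_general {N j : ℕ} (hjN : j + 2 ≤ N) {m : ℕ → ℕ}
    (hm : AntitoneOn m (Set.Icc (j + 1) N)) {G : K2}
    (hG : ∀ c, j + 1 < c → c < N → IsBlockSymmetric c 0 (m c) G) :
    symBlock (j + 1) 0 (m (j + 1))
        (iterSym N m (N - 2 - j) (Ycur N j m) * iterBlk N j m (N - 1 - j) G) =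
      ((∏ a ∈ Finset.Icc (j + 1) (N - 1), (m a - m (a + 1)).factorial : ℕ) : K2) *
        iterSym N m (N - 1 - j) (G * Ycur N j m) := by
  have h_Icc : Finset.Icc (j + 1) (N - 1) = Finset.Ico (N - (N - 1 - j)) N := by
    ext a
    simp only [Finset.mem_Icc, Finset.mem_Ico]
    omega
  have h_succ : N - 1 - j = N - 2 - j + 1 := by omega
  rw [symBlock_mul_iterBlk hm (fun a => isBlockSymmetric_iterSym_Ycur (by omega) hm) G (by omega),
    h_Icc, h_succ, iterSym_succ_mul_of_isBlockSymmetric (by omega) hG, mul_comm G]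

theorem statement11 (N j : ℕ) (m : ℕ → ℕ) (hj : 1 ≤ j) (hjN : j + 2 ≤ N)
    (hmono : ∀ a, j ≤ a → a < N → m (a + 1) ≤ m a) (hmN : m N = 0) :
    symBlock (j + 1) 0 (m (j + 1))
        (iterSym N m (N - 2 - j) (Ycur N j m) * iterBlk N j m (N - 1 - j) (Ucross j m)) =
      ((∏ a ∈ Finset.Icc (j + 1) (N - 1), (m a - m (a + 1)).factorial : ℕ) : K2) *
        iterSym N m (N - 1 - j) (Ucross j m * Ycur N j m) :=
  statement11_general hjN
    (antitoneOn_of_add_one_le Set.ordConnected_Icc fun a _ ha ha' =>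
      hmono a (by have := ha.1; omega) ha'.2)
    fun _ hc _ _ => typeAut_Ucross_of_ne (by omega) (by omega) _ _
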